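/- Let p and k be positive integers with k ≤ p and p ≡ k (mod 2). Then there exists a Maya diagram M such that the symmetric difference M Δ (M + k) has cardinality exactly p; i.e., for every fixed period p there exist p-cyclic Maya diagrams with every shift k = p, p−2, p−4, … down to 2 or 1. -/

import Mathlib

/-!
Maya diagrams are the sets at finite symmetric difference from the set of negative integers, and
`M ↦ M ∆ (M + k)` is additive for `∆`. If `M` is the set of negative integers, `M ∆ (M + k)` has
`|k|` elements. For `k ≠ 0`, toggling the membership of an integer `x` in `M` toggles that of `x`
and `x + k` in `M ∆ (M + k)`. As `M ∆ (M + k)` is finite, `x` can be chosen so that neither lies in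
it, and then its cardinality grows by exactly `2`.
-/

/-- A Maya diagram: a set of integers containing finitely many nonnegative
integers and excluding finitely many negative integers. -/
def IsMaya (M : Set ℤ) : Prop :=
  {m : ℤ | m ∈ M ∧ 0 ≤ m}.Finite ∧ {m : ℤ | m < 0 ∧ m ∉ M}.Finite

/-- The translate `M + k = {m + k : m ∈ M}`. -/
def shiftSet (M : Set ℤ) (k : ℤ) : Set ℤ := (fun m => m + k) '' M

open Set
open scoped symmDiff

theorem ncard_symmDiff_of_disjoint {α : Type*} {s t : Set α} (h : Disjoint s t)
    (hs : s.Finite) (ht : t.Finite) : (s ∆ t).ncard = s.ncard + t.ncard := by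
  rw [h.symmDiff_eq_sup]
  exact ncard_union_eq h hs ht

theorem symmDiff_Iio_Iio {α : Type*} [LinearOrder α] (a b : α) :
    Iio a ∆ Iio b = Ico b a ∪ Ico a b := by
  rw [Set.symmDiff_def, Iio_sdiff_Iio, Iio_sdiff_Iio]

theorem ncard_Ico_int (a b : ℤ) : (Ico a b).ncard = (b - a).toNat := by
  rw [← Finset.coe_Ico, ncard_coe_finset, Int.card_Ico]

theorem ncard_symmDiff_Iio_Iio (a b : ℤ) : (Iio a ∆ Iio b).ncard = (b - a).natAbs := by
  have hdisj : Disjoint (Ico b a) (Ico a b) :=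
    disjoint_left.2 fun _ hba hab => hba.2.not_ge hab.1
  rw [symmDiff_Iio_Iio, ncard_union_eq hdisj (finite_Ico b a) (finite_Ico a b),
    ncard_Ico_int, ncard_Ico_int]
  omega

theorem shiftSet_Iio (a k : ℤ) : shiftSet (Iio a) k = Iio (a + k) :=
  image_add_const_Iio k a

theorem shiftSet_singleton (x k : ℤ) : shiftSet {x} k = {x + k} :=
  image_singleton

theorem shiftSet_symmDiff (A B : Set ℤ) (k : ℤ) :
    shiftSet (A ∆ B) k = shiftSet A k ∆ shiftSet B k :=
  image_symmDiff (add_left_injective k) A B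

theorem symmDiff_shiftSet_symmDiff (A B : Set ℤ) (k : ℤ) :
    (A ∆ B) ∆ shiftSet (A ∆ B) k = (A ∆ shiftSet A k) ∆ (B ∆ shiftSet B k) := by
  rw [shiftSet_symmDiff, symmDiff_symmDiff_symmDiff_comm]

theorem singleton_symmDiff_shiftSet {k : ℤ} (hk : k ≠ 0) (x : ℤ) :
    {x} ∆ shiftSet {x} k = {x, x + k} := by
  have hdisj : Disjoint ({x} : Set ℤ) {x + k} := by simpa using hk
  rw [shiftSet_singleton, hdisj.symmDiff_eq_sup]
  rfl

theorem isMaya_iff_finite_symmDiff {M : Set ℤ} : IsMaya M ↔ (M ∆ Iio 0).Finite := by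
  have hnonneg : {m : ℤ | m ∈ M ∧ 0 ≤ m} = M \ Iio 0 := by ext; simp
  have hneg : {m : ℤ | m < 0 ∧ m ∉ M} = Iio 0 \ M := rfl
  rw [IsMaya, hnonneg, hneg, ← finite_union, Set.symmDiff_def]

theorem isMaya_Iio (a : ℤ) : IsMaya (Iio a) := by
  rw [isMaya_iff_finite_symmDiff, symmDiff_Iio_Iio]
  exact (finite_Ico 0 a).union (finite_Ico a 0)

namespace IsMaya

variable {M N : Set ℤ}

theorem finite_symmDiff_iff (hM : IsMaya M) : (N ∆ M).Finite ↔ IsMaya N := by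
  rw [isMaya_iff_finite_symmDiff] at hM ⊢
  rw [symmDiff_comm N, symmDiff_comm N]
  exact hM.symmDiff_congr

theorem symmDiff_of_finite (hM : IsMaya M) {F : Set ℤ} (hF : F.Finite) : IsMaya (M ∆ F) := by
  rwa [← hM.finite_symmDiff_iff, symmDiff_comm, symmDiff_symmDiff_cancel_left]

theorem shift (hM : IsMaya M) (k : ℤ) : IsMaya (shiftSet M k) := by
  rw [← (isMaya_Iio (0 + k)).finite_symmDiff_iff, ← shiftSet_Iio, ← shiftSet_symmDiff]
  exact (isMaya_iff_finite_symmDiff.1 hM).image _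

theorem finite_symmDiff_shiftSet (hM : IsMaya M) (k : ℤ) : (M ∆ shiftSet M k).Finite :=
  (hM.shift k).finite_symmDiff_iff.2 hM

theorem exists_ncard_symmDiff_shiftSet_add_two (hM : IsMaya M) {k : ℤ} (hk : k ≠ 0) :
    ∃ N, IsMaya N ∧ (N ∆ shiftSet N k).ncard = (M ∆ shiftSet M k).ncard + 2 := by
  have hfin := hM.finite_symmDiff_shiftSet k
  obtain ⟨b, hb⟩ := hfin.bddAbove
  let x := b + |k| + 1
  have hdisj : Disjoint (M ∆ shiftSet M k) {x, x + k} := by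
    have hx : b < x := by grind
    have hxk : b < x + k := by grind
    rw [disjoint_insert_right, disjoint_singleton_right]
    exact ⟨fun h => hx.not_ge (hb h), fun h => hxk.not_ge (hb h)⟩
  refine ⟨M ∆ {x}, hM.symmDiff_of_finite (finite_singleton x), ?_⟩
  rw [symmDiff_shiftSet_symmDiff, singleton_symmDiff_shiftSet hk,
    ncard_symmDiff_of_disjoint hdisj hfin (toFinite _), ncard_pair (by simpa using hk)]

end IsMaya

theorem exists_isMaya_ncard_symmDiff_shiftSet_eq {k : ℤ} (hk : k ≠ 0) (j : ℕ) :
    ∃ M, IsMaya M ∧ (M ∆ shiftSet M k).ncard = k.natAbs + 2 * j := by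
  induction j with
  | zero =>
    refine ⟨Iio 0, isMaya_Iio 0, ?_⟩
    rw [shiftSet_Iio, ncard_symmDiff_Iio_Iio]
    simp
  | succ j ih =>
    obtain ⟨M, hM, hcard⟩ := ih
    obtain ⟨N, hN, hN_card⟩ := hM.exists_ncard_symmDiff_shiftSet_add_two hk
    exact ⟨N, hN, by rw [hN_card, hcard]; ring⟩

theorem exists_cyclic_maya_of_shift_general (p : ℕ) (k : ℤ) (hk : k ≠ 0) (hkp : |k| ≤ p)
    (hpar : p ≡ k [ZMOD 2]) :
    ∃ M : Set ℤ, IsMaya M ∧ (M ∆ shiftSet M k).ncard = p := by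
  obtain ⟨j, rfl⟩ : ∃ j, p = k.natAbs + 2 * j :=
    ⟨(p - k.natAbs) / 2, by rw [Int.abs_eq_natAbs] at hkp; rw [Int.ModEq] at hpar; omega⟩
  exact exists_isMaya_ncard_symmDiff_shiftSet_eq hk j

/-- for every `p ≥ k ≥ 1` with `p ≡ k (mod 2)` there exists a
`p`-cyclic Maya diagram with shift `k`, i.e. `M` with `#(M ∆ (M+k)) = p`. -/
theorem exists_cyclic_maya_of_shift (p k : ℕ) (hk : 1 ≤ k) (hkp : k ≤ p)
    (hpar : p % 2 = k % 2) :
    ∃ M : Set ℤ, IsMaya M ∧ (symmDiff M (shiftSet M (k : ℤ))).ncard = p :=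
  exists_cyclic_maya_of_shift_general p k (by omega) (by simpa using hkp)
    (Int.natCast_modEq_iff.2 hpar)
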